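/- Let G be a finite simple bipartite graph of girth at least 6, let v0 ∈ V(G), and let r be a positive integer. If x, y ∈ B_r(v0), then there exists a 2-induced path from x to y all of whose vertices lie in B_{r+1}(v0). -/

import Mathlib

/-!
Write `L z` for the distance from `v0` to `z`; since `G` is bipartite, `L` changes by exactly one
along every edge. A vertex `z` is *below* `x` when some walk from `x` to `z` loses one level at
each step (`Below`). Two shapes of path from `x` to `y` are used:

* a *valley*: descend from `x` to a vertex `b` below both `x` and `y`, then ascend to `y`;
* a *bump*: descend from `x` to `u`, descend from `y` to `v`, where `u`, `v` lie on the same level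
  `j` and have a common neighbour `w` on level `j + 1`, and travel `x … u w v … y`.

Valleys exist, since `v0` is below everything reachable. Let `i` be the highest level of the bottom
of a valley. If there is a bump with base level `j > i`, take one with `j` maximal; otherwise take a
valley with bottom at level `i`. Both shapes stay in `B_{r+1}(v0)`, because the levels on a
descending part never exceed `r` and a bump rises one level above its base.

A descending walk has one vertex on each level, so it has no chords, and two of its vertices with a
common neighbour are two levels apart, whence absence of 4-cycles puts that neighbour on the walk
(`side_mid`). A chord or 2-chord between the two sides yields a valley or a bump on the level
of the lower of its ends, or a valley one level below; this contradicts maximality, except in small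
configurations around the bottom or the bump which would be 4-cycles. Thus the path is 2-induced
(`exists_valley_path`, `exists_bump_path`).
-/

open scoped Classical

/-- The ball `B_r(v)`: the set of all vertices at distance at most `r` from `v`. -/
def gBall {V : Type*} (G : SimpleGraph V) (v : V) (r : ℕ) : Set V :=
  {u | G.Reachable v u ∧ G.dist v u ≤ r}

section Levels

variable {V : Type*} {G : SimpleGraph V} {L : V → ℕ}

/-- `Below G L x z`: some walk from `x` to `z` has length `L x - L z`. When `L` changes by one along
each edge, this says that the walk loses one level at each step. -/
def Below (G : SimpleGraph V) (L : V → ℕ) (x z : V) : Prop :=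
  ∃ p : G.Walk x z, p.length + L z = L x

/-- The three properties asked of the path, apart from its being confined to a ball. -/
def TwoInduced {x y : V} (p : G.Walk x y) : Prop :=
  p.IsPath ∧
    (∀ u v : V, u ∈ p.support → v ∈ p.support → G.Adj u v → s(u, v) ∈ p.edges) ∧
    (∀ u w v : V, u ∈ p.support → v ∈ p.support → w ∉ p.support →
      G.Adj u w → G.Adj w v → u ≠ v → s(u, v) ∈ p.edges)

lemma Below.le {x z : V} (h : Below G L x z) : L z ≤ L x := by
  obtain ⟨p, hp⟩ := h
  omega

lemma Below.step {x z z' : V} (h : Below G L x z) (ha : G.Adj z z') (hl : L z = L z' + 1) :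
    Below G L x z' := by
  obtain ⟨p, hp⟩ := h
  exact ⟨p.concat ha, by rw [SimpleGraph.Walk.length_concat]; omega⟩

lemma isPath_append_of_inter {a b c : V} (p : G.Walk a b) (q : G.Walk b c) (hp : p.IsPath)
    (hq : q.IsPath) (h : ∀ z ∈ p.support, z ∈ q.support → z = b) : (p.append q).IsPath := by
  induction p with
  | nil => simpa using hq
  | cons hadj p ih =>
    rw [SimpleGraph.Walk.cons_isPath_iff] at hp
    rw [SimpleGraph.Walk.cons_append, SimpleGraph.Walk.cons_isPath_iff]
    refine ⟨ih q hp.1 hq fun z hz hz' => h z (by simp [hz]) hz', ?_⟩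
    rw [SimpleGraph.Walk.mem_support_append_iff]
    rintro (h1 | h1)
    · exact hp.2 h1
    · have := h _ (by simp) h1
      subst this
      exact hp.2 p.end_mem_support

lemma level_le_length (hL : ∀ u v, G.Adj u v → L u = L v + 1 ∨ L v = L u + 1) {a b : V}
    (p : G.Walk a b) : L a ≤ p.length + L b := by
  induction p with
  | nil => simp
  | cons h p ih =>
    have := hL _ _ h
    rw [SimpleGraph.Walk.length_cons]
    omega

/-- The structure of a descending walk: all its vertices are below its start and no lower than its
end, each level is met once, and consecutive levels are joined by edges of the walk. -/
lemma side_facts (hL : ∀ u v, G.Adj u v → L u = L v + 1 ∨ L v = L u + 1) {x u : V}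
    (p : G.Walk x u) (hp : p.length + L u = L x) :
    p.IsPath ∧ (∀ z ∈ p.support, Below G L x z ∧ L u ≤ L z) ∧
      (∀ z ∈ p.support, ∀ z' ∈ p.support, L z = L z' → z = z') ∧
      (∀ z ∈ p.support, ∀ z' ∈ p.support, L z' = L z + 1 → s(z, z') ∈ p.edges) ∧
      (∀ z ∈ p.support, ∀ z' ∈ p.support, L z' = L z + 2 →
        ∃ m ∈ p.support, G.Adj z m ∧ G.Adj m z') := by
  induction p with
  | @nil a => exact ⟨by simp, by simpa using ⟨SimpleGraph.Walk.nil, by simp⟩, by simp, by simp, by simp⟩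
  | @cons x x' u h p ih =>
    rw [SimpleGraph.Walk.length_cons] at hp
    have h1 := level_le_length hL p
    have h2 := hL _ _ h
    have hx : L x = L x' + 1 := by omega
    obtain ⟨i0, i1, i2, i3, i4⟩ := ih (by omega)
    have hlt : ∀ z ∈ p.support, L z < L x := fun z hz => by
      have := (i1 z hz).1.le
      omega
    have hs : x' ∈ p.support := p.start_mem_support
    refine ⟨?_, ?_, ?_, ?_, ?_⟩
    · rw [SimpleGraph.Walk.cons_isPath_iff]
      exact ⟨i0, fun hh => absurd (hlt _ hh) (lt_irrefl _)⟩
    · intro z hz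
      rw [SimpleGraph.Walk.support_cons, List.mem_cons] at hz
      rcases hz with rfl | hz
      · exact ⟨⟨SimpleGraph.Walk.nil, by simp⟩, by omega⟩
      · obtain ⟨⟨q, hq⟩, h3⟩ := i1 z hz
        exact ⟨⟨SimpleGraph.Walk.cons h q, by rw [SimpleGraph.Walk.length_cons]; omega⟩, h3⟩
    · intro z hz z' hz' he
      rw [SimpleGraph.Walk.support_cons, List.mem_cons] at hz hz'
      rcases hz with rfl | hz <;> rcases hz' with rfl | hz'
      · rfl
      · have := hlt _ hz'
        omega
      · have := hlt _ hz
        omega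
      · exact i2 z hz z' hz' he
    · intro z hz z' hz' he
      rw [SimpleGraph.Walk.support_cons, List.mem_cons] at hz hz'
      rw [SimpleGraph.Walk.edges_cons, List.mem_cons]
      rcases hz with rfl | hz <;> rcases hz' with rfl | hz'
      · omega
      · have := hlt _ hz'
        omega
      · left
        rw [i2 z hz x' hs (by omega), Sym2.eq_swap]
      · exact Or.inr (i3 z hz z' hz' he)
    · intro z hz z' hz' he
      rw [SimpleGraph.Walk.support_cons, List.mem_cons] at hz hz'
      rcases hz with rfl | hz <;> rcases hz' with rfl | hz'
      · omega
      · have := hlt _ hz'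
        omega
      · exact ⟨x', by simp, p.adj_of_mem_edges (i3 z hz x' hs (by omega)), h.symm⟩
      · obtain ⟨m, hm, h3⟩ := i4 z hz z' hz' he
        exact ⟨m, by simp [hm], h3⟩

/-- A descending walk has no chords. -/
lemma side_adj (hL : ∀ u v, G.Adj u v → L u = L v + 1 ∨ L v = L u + 1) {x u : V}
    (p : G.Walk x u) (hp : p.length + L u = L x) {z z' : V} (hz : z ∈ p.support)
    (hz' : z' ∈ p.support) (ha : G.Adj z z') : s(z, z') ∈ p.edges := by
  obtain ⟨-, -, -, h3, -⟩ := side_facts hL p hp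
  rcases hL _ _ ha with h | h
  · rw [Sym2.eq_swap]
    exact h3 _ hz' _ hz h
  · exact h3 _ hz _ hz' h

/-- A common neighbour of two vertices of a descending walk lies on the walk. -/
lemma side_mid (hL : ∀ u v, G.Adj u v → L u = L v + 1 ∨ L v = L u + 1)
    (hC : ∀ a b c d, a ≠ c → G.Adj a b → G.Adj b c → G.Adj a d → G.Adj d c → b = d) {x u : V}
    (p : G.Walk x u) (hp : p.length + L u = L x) {z w z' : V} (hz : z ∈ p.support)
    (hz' : z' ∈ p.support) (hne : z ≠ z') (ha : G.Adj z w) (hb : G.Adj w z') : w ∈ p.support := by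
  obtain ⟨-, -, h2, -, h4⟩ := side_facts hL p hp
  have key : ∀ a ∈ p.support, ∀ c ∈ p.support, a ≠ c → G.Adj a w → G.Adj w c →
      L c = L a + 2 → w ∈ p.support := by
    intro a ha c hc hne h5 h6 h7
    obtain ⟨m, hm, h8, h9⟩ := h4 a ha c hc h7
    rwa [hC a w c m hne h5 h6 h8 h9]
  rcases hL _ _ ha with h5 | h5 <;> rcases hL _ _ hb with h6 | h6
  · exact key _ hz' _ hz hne.symm hb.symm ha.symm (by omega)
  · exact absurd (h2 _ hz _ hz' (by omega)) hne
  · exact absurd (h2 _ hz _ hz' (by omega)) hne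
  · exact key _ hz _ hz' hne ha hb (by omega)

/-- A valley whose bottom `b` is as high as possible is 2-induced, provided that no bump has its
base above `b`. -/
lemma exists_valley_path (hL : ∀ u v, G.Adj u v → L u = L v + 1 ∨ L v = L u + 1)
    (hC : ∀ a b c d, a ≠ c → G.Adj a b → G.Adj b c → G.Adj a d → G.Adj d c → b = d) {x y b : V}
    (hbx : Below G L x b) (hby : Below G L y b)
    (hV : ∀ c, Below G L x c → Below G L y c → L c ≤ L b)
    (hB : ∀ u v w, Below G L x u → Below G L y v → G.Adj u w → G.Adj w v → L u = L v →
      L w = L u + 1 → L u ≤ L b) :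
    ∃ p : G.Walk x y, TwoInduced p ∧ ∀ z ∈ p.support, L z ≤ max (L x) (L y) + 1 := by
  obtain ⟨p, hp⟩ := hbx
  obtain ⟨q, hq⟩ := hby
  obtain ⟨p0, p1, p2, p3, -⟩ := side_facts hL p hp
  obtain ⟨q0, q1, q2, q3, -⟩ := side_facts hL q hq
  have hbp : b ∈ p.support := p.end_mem_support
  have hbq : b ∈ q.support := q.end_mem_support
  have bot_p : ∀ z ∈ p.support, L z ≤ L b → z = b := fun z hz h =>
    p2 z hz b hbp (le_antisymm h (p1 z hz).2)
  have bot_q : ∀ z ∈ q.support, L z ≤ L b → z = b := fun z hz h =>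
    q2 z hz b hbq (le_antisymm h (q1 z hz).2)
  have cross_adj : ∀ z ∈ p.support, ∀ z' ∈ q.support, G.Adj z z' →
      s(z, z') ∈ p.edges ∨ s(z, z') ∈ q.edges := by
    intro z hz z' hz' ha
    rcases hL _ _ ha with h | h
    · have := bot_q z' hz' (hV _ ((p1 z hz).1.step ha h) (q1 z' hz').1)
      subst this
      exact Or.inl (side_adj hL p hp hz hbp ha)
    · have := bot_p z hz (hV _ (p1 z hz).1 ((q1 z' hz').1.step ha.symm h))
      subst this
      exact Or.inr (side_adj hL q hq hbq hz' ha)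
  have cross_mid : ∀ z ∈ p.support, ∀ w, ∀ z' ∈ q.support, G.Adj z w → G.Adj w z' → z ≠ z' →
      w ∈ p.support ∨ w ∈ q.support := by
    intro z hz w z' hz' ha hb hne
    have hzx := (p1 z hz).1
    have hzy := (q1 z' hz').1
    rcases hL _ _ ha with h5 | h5 <;> rcases hL _ _ hb with h6 | h6
    · have := bot_q z' hz' (hV _ ((hzx.step ha h5).step hb h6) hzy)
      subst this
      exact Or.inl (side_mid hL hC p hp hz hbp hne ha hb)
    · have h7 := hV _ (hzx.step ha h5) (hzy.step hb.symm h6)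
      -- As the bottom of a valley, `w` is not above `b`. So either both ends are `b`, or `w` and
      -- `b` are common neighbours of the two ends.
      by_cases h8 : L z ≤ L b
      · exact absurd ((bot_p z hz h8).trans (bot_q z' hz' (by omega)).symm) hne
      · have h9 := p.adj_of_mem_edges (p3 b hbp z hz (by omega))
        have h10 := q.adj_of_mem_edges (q3 b hbq z' hz' (by omega))
        have := hC z w z' b hne ha hb h9.symm h10
        subst this
        exact Or.inl hbp
    · have h7 := hB z z' w hzx hzy ha hb (by omega) h5
      exact absurd ((bot_p z hz h7).trans (bot_q z' hz' (by omega)).symm) hne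
    · have := bot_p z hz (hV _ hzx ((hzy.step hb.symm h6).step ha.symm h5))
      subst this
      exact Or.inr (side_mid hL hC q hq hbq hz' hne ha hb)
  refine ⟨p.append q.reverse, ⟨?_, ?_, ?_⟩, ?_⟩
  · refine isPath_append_of_inter _ _ p0 q0.reverse fun z hz hz' => ?_
    rw [SimpleGraph.Walk.support_reverse, List.mem_reverse] at hz'
    exact bot_p z hz (hV z (p1 z hz).1 (q1 z hz').1)
  · simp only [SimpleGraph.Walk.mem_support_append_iff, SimpleGraph.Walk.support_reverse,
      List.mem_reverse, SimpleGraph.Walk.edges_append, SimpleGraph.Walk.edges_reverse,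
      List.mem_append]
    rintro z z' (hz | hz) (hz' | hz') ha
    · exact Or.inl (side_adj hL p hp hz hz' ha)
    · exact cross_adj z hz z' hz' ha
    · rw [Sym2.eq_swap]
      exact cross_adj z' hz' z hz ha.symm
    · exact Or.inr (side_adj hL q hq hz hz' ha)
  · simp only [SimpleGraph.Walk.mem_support_append_iff, SimpleGraph.Walk.support_reverse,
      List.mem_reverse]
    rintro z w z' (hz | hz) (hz' | hz') hw ha hb hne <;> refine absurd ?_ hw
    · exact Or.inl (side_mid hL hC p hp hz hz' hne ha hb)
    · exact cross_mid z hz w z' hz' ha hb hne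
    · exact cross_mid z' hz' w z hz hb.symm ha.symm hne.symm
    · exact Or.inr (side_mid hL hC q hq hz hz' hne ha hb)
  · intro z hz
    rw [SimpleGraph.Walk.mem_support_append_iff, SimpleGraph.Walk.support_reverse,
      List.mem_reverse] at hz
    rcases hz with hz | hz
    · have := (p1 z hz).1.le
      omega
    · have := (q1 z hz).1.le
      omega

/-- The top `w` of a bump, seen from one side: here `q` is the side from `y` down to `v`, and no
vertex at the level of `v` or above is below both `x` and `y`. The top is not on `q`, its only
neighbour on `q` is `v`, and any common neighbour of `w` with another vertex of `q` is on `q`. -/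
lemma bump_top (hL : ∀ u v, G.Adj u v → L u = L v + 1 ∨ L v = L u + 1)
    (hC : ∀ a b c d, a ≠ c → G.Adj a b → G.Adj b c → G.Adj a d → G.Adj d c → b = d)
    {x y u v w : V} (hux : Below G L x u) (huw : G.Adj u w) (hwv : G.Adj w v) (hlw : L w = L u + 1)
    (huv : L u = L v) (q : G.Walk y v) (hq : q.length + L v = L y)
    (hV : ∀ c, Below G L x c → Below G L y c → L c < L u) :
    w ∉ q.support ∧ (∀ z ∈ q.support, G.Adj w z → z = v) ∧
      (∀ z ∈ q.support, ∀ t, G.Adj w t → G.Adj t z → w ≠ z → t ∈ q.support) := by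
  obtain ⟨-, q1, q2, q3, -⟩ := side_facts hL q hq
  have hvq : v ∈ q.support := q.end_mem_support
  -- If `w` were below `y`, then `u` would be the bottom of a valley.
  have hwy : ¬ Below G L y w := fun h =>
    absurd (hV u hux (h.step huw.symm hlw)) (lt_irrefl _)
  refine ⟨fun h => hwy (q1 w h).1, ?_, ?_⟩
  · intro z hz ha
    rcases hL _ _ ha with h | h
    · exact q2 z hz v hvq (by omega)
    · exact absurd ((q1 z hz).1.step ha.symm h) hwy
  · intro z hz t ha hb hne
    have h7 := (q1 z hz).2
    -- A neighbour `z` of `v` on `q` one level up, at distance two from `w`, forces `t = v`.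
    have up : L z = L v + 1 → t ∈ q.support := by
      intro h
      have h8 := q.adj_of_mem_edges (q3 v hvq z hz h)
      rwa [hC w t z v hne ha hb hwv h8]
    rcases hL _ _ ha with h5 | h5 <;> rcases hL _ _ hb with h6 | h6
    · omega
    · exact up (by omega)
    · exact up (by omega)
    · exact absurd (((q1 z hz).1.step hb.symm h6).step ha.symm h5) hwy

/-- A bump whose base is as high as possible, and above the bottoms of all valleys, gives a
2-induced path. -/
lemma exists_bump_path (hL : ∀ u v, G.Adj u v → L u = L v + 1 ∨ L v = L u + 1)
    (hC : ∀ a b c d, a ≠ c → G.Adj a b → G.Adj b c → G.Adj a d → G.Adj d c → b = d)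
    {x y u v w : V} (hux : Below G L x u) (hvy : Below G L y v) (huw : G.Adj u w)
    (hwv : G.Adj w v) (huv : L u = L v) (hlw : L w = L u + 1)
    (hV : ∀ c, Below G L x c → Below G L y c → L c < L u)
    (hB : ∀ u' v' w', Below G L x u' → Below G L y v' → G.Adj u' w' → G.Adj w' v' → L u' = L v' →
      L w' = L u' + 1 → L u' ≤ L u) :
    ∃ p : G.Walk x y, TwoInduced p ∧ ∀ z ∈ p.support, L z ≤ max (L x) (L y) + 1 := by
  have hux' := hux
  have hvy' := hvy
  obtain ⟨p, hp⟩ := hux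
  obtain ⟨q, hq⟩ := hvy
  obtain ⟨p0, p1, p2, p3, -⟩ := side_facts hL p hp
  obtain ⟨q0, q1, q2, q3, -⟩ := side_facts hL q hq
  have hup : u ∈ p.support := p.end_mem_support
  have hvq : v ∈ q.support := q.end_mem_support
  have hne_uv : u ≠ v := by
    rintro rfl
    exact absurd (hV u hux' hvy') (lt_irrefl _)
  obtain ⟨wq0, wq1, wq2⟩ := bump_top hL hC hux' huw hwv hlw huv q hq hV
  obtain ⟨wp0, wp1, wp2⟩ := bump_top hL hC hvy' hwv.symm huw.symm (by omega) huv.symm p hp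
    (fun c h1 h2 => by rw [← huv]; exact hV c h2 h1)
  have disj : ∀ z ∈ p.support, z ∉ q.support := fun z hz hz' => by
    have h1 := hV z (p1 z hz).1 (q1 z hz').1
    have h2 := (p1 z hz).2
    omega
  have cross_adj : ∀ z ∈ p.support, ∀ z' ∈ q.support, ¬ G.Adj z z' := by
    intro z hz z' hz' ha
    have h1 := (p1 z hz).2
    have h2 := (q1 z' hz').2
    rcases hL _ _ ha with h | h
    · have := hV _ ((p1 z hz).1.step ha h) (q1 z' hz').1
      omega
    · have := hV _ (p1 z hz).1 ((q1 z' hz').1.step ha.symm h)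
      omega
  have cross_mid : ∀ z ∈ p.support, ∀ t, ∀ z' ∈ q.support, G.Adj z t → G.Adj t z' → t = w := by
    intro z hz t z' hz' ha hb
    have hzx := (p1 z hz).1
    have hzy := (q1 z' hz').1
    have h1 := (p1 z hz).2
    have h2 := (q1 _ hz').2
    -- Ends on the base level are `u` and `v`, whose only common neighbour is `w`.
    have base : L z = L z' → L z ≤ L u → t = w := by
      intro h3 h4
      have e1 := p2 z hz u hup (by omega)
      have e2 := q2 z' hz' v hvq (by omega)
      subst e1 e2
      exact hC _ _ _ _ hne_uv ha hb huw hwv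
    rcases hL _ _ ha with h5 | h5 <;> rcases hL _ _ hb with h6 | h6
    · have := hV _ ((hzx.step ha h5).step hb h6) hzy
      omega
    · have := hV _ (hzx.step ha h5) (hzy.step hb.symm h6)
      exact base (by omega) (by omega)
    · exact base (by omega) (hB z z' t hzx hzy ha hb (by omega) h5)
    · have := hV _ hzx ((hzy.step hb.symm h6).step ha.symm h5)
      omega
  have mem_supp : ∀ z, z ∈ (p.append (.cons huw (.cons hwv q.reverse))).support ↔
      z ∈ p.support ∨ z = w ∨ z ∈ q.support := by
    intro z
    simp only [SimpleGraph.Walk.mem_support_append_iff, SimpleGraph.Walk.support_cons,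
      SimpleGraph.Walk.support_reverse, List.mem_cons, List.mem_reverse]
    constructor
    · rintro (h | rfl | h | h)
      exacts [Or.inl h, Or.inl hup, Or.inr (Or.inl h), Or.inr (Or.inr h)]
    · rintro (h | h | h)
      exacts [Or.inl h, Or.inr (Or.inr (Or.inl h)), Or.inr (Or.inr (Or.inr h))]
  have mem_edges : ∀ e, e ∈ (p.append (.cons huw (.cons hwv q.reverse))).edges ↔
      e ∈ p.edges ∨ e = s(u, w) ∨ e = s(w, v) ∨ e ∈ q.edges := by
    intro e
    simp
  refine ⟨p.append (.cons huw (.cons hwv q.reverse)), ⟨?_, ?_, ?_⟩, ?_⟩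
  · refine isPath_append_of_inter _ _ p0 ?_ fun z hz hz' => ?_
    · have h1 : u ≠ w := huw.ne
      have h2 := disj u hup
      simp [SimpleGraph.Walk.cons_isPath_iff, q0.reverse, wq0, h1, h2]
    · simp only [SimpleGraph.Walk.support_cons, SimpleGraph.Walk.support_reverse, List.mem_cons,
        List.mem_reverse] at hz'
      rcases hz' with h | rfl | h
      · exact h
      · exact absurd hz wp0
      · exact absurd h (disj z hz)
  · intro z z' hz hz' ha
    rw [mem_supp] at hz hz'
    rw [mem_edges]
    rcases hz with hz | rfl | hz <;> rcases hz' with hz' | rfl | hz'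
    · exact Or.inl (side_adj hL p hp hz hz' ha)
    · rw [wp1 z hz ha.symm]
      exact Or.inr (Or.inl rfl)
    · exact absurd ha (cross_adj z hz z' hz')
    · rw [wp1 z' hz' ha, Sym2.eq_swap]
      exact Or.inr (Or.inl rfl)
    · exact absurd rfl ha.ne
    · rw [wq1 z' hz' ha]
      exact Or.inr (Or.inr (Or.inl rfl))
    · exact absurd ha.symm (cross_adj z' hz' z hz)
    · rw [wq1 z hz ha.symm, Sym2.eq_swap]
      exact Or.inr (Or.inr (Or.inl rfl))
    · exact Or.inr (Or.inr (Or.inr (side_adj hL q hq hz hz' ha)))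
  · intro z t z' hz hz' ht ha hb hne
    rw [mem_supp] at hz hz'
    refine absurd ?_ ht
    rw [mem_supp]
    rcases hz with hz | rfl | hz <;> rcases hz' with hz' | rfl | hz'
    · exact Or.inl (side_mid hL hC p hp hz hz' hne ha hb)
    · exact Or.inl (wp2 z hz t hb.symm ha.symm hne.symm)
    · exact Or.inr (Or.inl (cross_mid z hz t z' hz' ha hb))
    · exact Or.inl (wp2 z' hz' t ha hb hne)
    · exact absurd rfl hne
    · exact Or.inr (Or.inr (wq2 z' hz' t ha hb hne))
    · exact Or.inr (Or.inl (cross_mid z' hz' t z hz hb.symm ha.symm))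
    · exact Or.inr (Or.inr (wq2 z hz t hb.symm ha.symm hne.symm))
    · exact Or.inr (Or.inr (side_mid hL hC q hq hz hz' hne ha hb))
  · intro z hz
    rw [mem_supp] at hz
    rcases hz with hz | rfl | hz
    · have := (p1 z hz).1.le
      omega
    · have := hux'.le
      omega
    · have := (q1 z hz).1.le
      omega

lemma exists_twoInduced (hL : ∀ u v, G.Adj u v → L u = L v + 1 ∨ L v = L u + 1)
    (hC : ∀ a b c d, a ≠ c → G.Adj a b → G.Adj b c → G.Adj a d → G.Adj d c → b = d)
    {x y v0 : V} (hx : Below G L x v0) (hy : Below G L y v0) :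
    ∃ p : G.Walk x y, TwoInduced p ∧ ∀ z ∈ p.support, L z ≤ max (L x) (L y) + 1 := by
  -- A set of naturals, nonempty and bounded by `L x`, has a greatest element.
  have greatest : ∀ P : ℕ → Prop, (∃ k, P k) → (∀ k, P k → k ≤ L x) →
      ∃ k, P k ∧ ∀ j, P j → j ≤ k := by
    intro P ⟨k, hk⟩ hb
    exact ⟨Nat.findGreatest P (L x), Nat.findGreatest_spec (hb k hk) hk,
      fun j hj => Nat.le_findGreatest (hb j hj) hj⟩
  obtain ⟨_, ⟨b, hbx, hby, rfl⟩, hmax⟩ :=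
    greatest (fun k => ∃ b, Below G L x b ∧ Below G L y b ∧ L b = k) ⟨_, v0, hx, hy, rfl⟩
      (by rintro k ⟨b, h, -, rfl⟩; exact h.le)
  have hV : ∀ c, Below G L x c → Below G L y c → L c ≤ L b := fun c h1 h2 =>
    hmax _ ⟨c, h1, h2, rfl⟩
  by_cases hbump : ∃ k, ∃ u v w, Below G L x u ∧ Below G L y v ∧ G.Adj u w ∧ G.Adj w v ∧
      L u = L v ∧ L w = L u + 1 ∧ L b < L u ∧ L u = k
  · obtain ⟨_, ⟨u, v, w, h1, h2, h3, h4, h5, h6, h7, rfl⟩, hm⟩ := greatest _ hbump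
      (by rintro k ⟨u, v, w, h, -, -, -, -, -, -, rfl⟩; exact h.le)
    refine exists_bump_path hL hC h1 h2 h3 h4 h5 h6
      (fun c hc hc' => (hV c hc hc').trans_lt h7) ?_
    intro u' v' w' g1 g2 g3 g4 g5 g6
    by_contra hlt
    exact hlt (hm _ ⟨u', v', w', g1, g2, g3, g4, g5, g6, by omega, rfl⟩)
  · refine exists_valley_path hL hC hbx hby hV ?_
    intro u v w h1 h2 h3 h4 h5 h6
    by_contra hlt
    exact hbump ⟨_, u, v, w, h1, h2, h3, h4, h5, h6, by omega, rfl⟩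

lemma no_four_cycle (hgirth : 6 ≤ G.egirth) (a b c d : V) (hac : a ≠ c) (h1 : G.Adj a b)
    (h2 : G.Adj b c) (h3 : G.Adj a d) (h4 : G.Adj d c) : b = d := by
  by_contra hbd
  let p : G.Walk a a := .cons h1 (.cons h2 (.cons h4.symm (.cons h3.symm .nil)))
  have hp : p.IsCycle := by
    simp [p, SimpleGraph.Walk.cons_isCycle_iff, SimpleGraph.Walk.cons_isPath_iff, hbd, hac,
      hac.symm, h1.ne, h1.ne', h2.ne, h3.ne, h3.ne', h4.ne']
  have h5 := hgirth.trans (SimpleGraph.le_egirth.mp le_rfl a p hp)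
  have h6 : p.length = 4 := rfl
  rw [h6] at h5
  exact absurd h5 (by decide)

end Levels

/-- **Proposition 7.** Let `G` be a bipartite graph of girth at least `6`, `v0 ∈ V(G)`, and
`r ≥ 1`. If `x, y ∈ B_r(v0)`, then there is a `2`-induced path from `x` to `y` contained in
`B_{r+1}(v0)`; a path is `2`-induced if any two of its vertices that are adjacent in `G` or
joined by a path of length `2` through a vertex outside the path are consecutive on the path. -/
theorem two_induced_path_in_ball
    {V : Type*} [Fintype V] (G : SimpleGraph V)
    (hbip : G.Colorable 2) (hgirth : 6 ≤ G.egirth)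
    (v0 : V) (r : ℕ) (hr : 1 ≤ r)
    (x y : V) (hx : x ∈ gBall G v0 r) (hy : y ∈ gBall G v0 r) :
    ∃ p : G.Walk x y, p.IsPath ∧
      (∀ u v : V, u ∈ p.support → v ∈ p.support → G.Adj u v → s(u, v) ∈ p.edges) ∧
      (∀ u w v : V, u ∈ p.support → v ∈ p.support → w ∉ p.support →
        G.Adj u w → G.Adj w v → u ≠ v → s(u, v) ∈ p.edges) ∧
      (∀ u ∈ p.support, u ∈ gBall G v0 (r + 1)) := by
  obtain ⟨c⟩ : Nonempty (G.Coloring Bool) := by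
    obtain ⟨c⟩ := hbip
    exact ⟨G.recolorOfEquiv finTwoEquiv c⟩
  -- `G.dist` is `0` between different components, so off the component of `v0` the level is
  -- replaced by the colour; then the level changes by one along every edge of `G`.
  let L : V → ℕ := fun z => if G.Reachable v0 z then G.dist v0 z else (c z).toNat
  have hLr : ∀ z, G.Reachable v0 z → L z = G.dist v0 z := fun z hz => if_pos hz
  have hL : ∀ u v, G.Adj u v → L u = L v + 1 ∨ L v = L u + 1 := by
    intro u v ha
    by_cases hu : G.Reachable v0 u
    · have hv := hu.trans ha.reachable
      rw [hLr u hu, hLr v hv]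
      have hne : G.dist v0 u ≠ G.dist v0 v := by
        intro he
        obtain ⟨p, hp⟩ := hu.exists_walk_length_eq_dist
        obtain ⟨q, hq⟩ := hv.exists_walk_length_eq_dist
        have h1 := c.even_length_iff_congr p
        have h2 := c.even_length_iff_congr q
        rw [hp, he, ← hq, h2] at h1
        have h3 := c.valid ha
        revert h1 h3
        cases c v0 <;> cases c u <;> cases c v <;> simp
      have := ha.diff_dist_adj (u := v0)
      omega
    · have hv : ¬ G.Reachable v0 v := fun h => hu (h.trans ha.symm.reachable)
      have h3 := c.valid ha
      simp only [L, if_neg hu, if_neg hv]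
      revert h3
      cases c u <;> cases c v <;> simp
  have below : ∀ z, G.Reachable v0 z → Below G L z v0 := by
    intro z hz
    obtain ⟨p, hp⟩ := hz.exists_walk_length_eq_dist
    refine ⟨p.reverse, ?_⟩
    rw [hLr z hz, hLr v0 (SimpleGraph.Reachable.refl _), SimpleGraph.dist_self,
      SimpleGraph.Walk.length_reverse, hp, add_zero]
  obtain ⟨p, ⟨h1, h2, h3⟩, h4⟩ :=
    exists_twoInduced hL (no_four_cycle hgirth) (below x hx.1) (below y hy.1)
  refine ⟨p, h1, h2, h3, fun z hz => ?_⟩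
  have hz' : G.Reachable v0 z := hx.1.trans ⟨p.takeUntil z hz⟩
  refine ⟨hz', ?_⟩
  have h5 := h4 z hz
  rw [hLr z hz', hLr x hx.1, hLr y hy.1] at h5
  have h6 := hx.2
  have h7 := hy.2
  omega
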